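/- Let G be a finite subgroup of N such that π(G) = N/T (the whole order-8 quotient), the order of G ∩ T is 1 or 2, and no point of ℂˣ×ℂˣ is fixed by every element of G. Then G is conjugate by an element of N to one of the following three subgroups: (1) ⟨τ_{−1,−1}·s, ι₁·s⟩, generated by (x,y) ↦ (−y,−x) and (x,y) ↦ (y⁻¹,x), isomorphic to the dihedral group D₄ of order 8; (2) ⟨τ_{−1,−1}, s, ι₁·s⟩, generated by (x,y) ↦ (−x,−y), (x,y) ↦ (y,x) and (x,y) ↦ (y⁻¹,x), isomorphic to C₂ × D₄ of order 16; (3) ⟨τ_{−1,−1}, τ_{1,−1}·s, ι₁·s⟩, generated by (x,y) ↦ (−x,−y), (x,y) ↦ (y,−x) and (x,y) ↦ (y⁻¹,x), a group of order 16 isomorphic to C₂²⋊C₄ (GAP ID (16,3)). -/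

import Mathlib

noncomputable section

/-- The torus ℂˣ × ℂˣ on which the group N acts. -/
abbrev TT : Type := ℂˣ × ℂˣ

/-- The inversion ι₁ : (x,y) ↦ (x⁻¹, y), as a group automorphism of the torus. -/
def j1 : MulAut TT := MulEquiv.prodCongr (MulEquiv.inv ℂˣ) (MulEquiv.refl ℂˣ)

/-- The inversion ι₂ : (x,y) ↦ (x, y⁻¹), as a group automorphism of the torus. -/
def j2 : MulAut TT := MulEquiv.prodCongr (MulEquiv.refl ℂˣ) (MulEquiv.inv ℂˣ)

/-- The swap s : (x,y) ↦ (y,x), as a group automorphism of the torus. -/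
def sA : MulAut TT := MulEquiv.prodComm

/-- D = ⟨ι₁, ι₂, s⟩ ≅ C₂≀C₂ ≅ D₄, the group of automorphisms of the torus permuting
the four boundary lines of ℙ¹×ℙ¹. -/
def DD : Subgroup (MulAut TT) := Subgroup.closure {j1, j2, sA}

/-- N = T ⋊ D, the normalizer of the maximal torus in Aut(ℙ¹×ℙ¹): the group of
bijections of ℂˣ × ℂˣ generated by the scalings τ_{a,b} : (x,y) ↦ (ax,by),
the inversions ι₁, ι₂, and the swap s.  The element ⟨(a,b), d⟩ acts on p ∈ ℂˣ × ℂˣ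
by p ↦ (a,b) * d(p). -/
abbrev NQ : Type := SemidirectProduct TT DD DD.subtype

/-- ι₁ as an element of D. -/
def dj1 : DD := ⟨j1, Subgroup.subset_closure (by simp)⟩

/-- ι₂ as an element of D. -/
def dj2 : DD := ⟨j2, Subgroup.subset_closure (by simp)⟩

/-- s as an element of D. -/
def dsA : DD := ⟨sA, Subgroup.subset_closure (by simp)⟩

/-- ι₁ι₂ as an element of D. -/
def d12 : DD := dj1 * dj2

/-- ι₁·s (i.e. (x,y) ↦ (y⁻¹, x)) as an element of D. -/
def d1s : DD := dj1 * dsA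

/-- The scaling τ_{a,b} : (x,y) ↦ (ax, by), as an element of N. -/
def tl (a b : ℂˣ) : NQ := SemidirectProduct.inl ((a, b) : TT)

/-- The element of N given by an element of D. -/
def rr (d : DD) : NQ := SemidirectProduct.inr d

/-- The scaling subgroup T ≤ N. -/
def Tsub : Subgroup NQ := (SemidirectProduct.inl : TT →* NQ).range

/-- The projection π : N → N/T ≅ D. -/
def πN : NQ →* DD := SemidirectProduct.rightHom

/-- ζ_m = exp(2πi/m), a fixed primitive m-th root of unity in ℂ (as a unit). -/
def ζu (m : ℕ) : ℂˣ :=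
  Units.mk0 (Complex.exp (2 * Real.pi * Complex.I / m)) (Complex.exp_ne_zero _)

/-- The point of ℂˣ × ℂˣ is fixed by the element g of N. -/
def fixes (g : NQ) (p : TT) : Prop := g.left * (g.right : MulAut TT) p = p

/-- The hom from a cyclic group given by an element of order dividing n. -/
lemma pow_val_add {G : Type*} [Group G] {n : ℕ} [NeZero n] (R : G) (h : R ^ n = 1) (i j : ZMod n) :
    R ^ (i + j).val = R ^ i.val * R ^ j.val := by
  rw [ZMod.val_add, ← pow_add]
  conv_rhs => rw [← Nat.mod_add_div (i.val + j.val) n, pow_add, pow_mul, h, one_pow, mul_one]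

lemma pow_val_neg {G : Type*} [Group G] {n : ℕ} [NeZero n] (R : G) (h : R ^ n = 1) (i : ZMod n) :
    R ^ (-i).val = (R ^ i.val)⁻¹ := by
  apply eq_inv_of_mul_eq_one_left
  rw [← pow_val_add R h]; simp

def cycHom {G : Type*} [Group G] {n : ℕ} [NeZero n] (R : G) (h : R ^ n = 1) :
    Multiplicative (ZMod n) →* G where
  toFun i := R ^ (Multiplicative.toAdd i).val
  map_one' := by simp
  map_mul' i j := pow_val_add R h _ _

lemma conj_pow_inv {G : Type*} [Group G] (R S : G) (hRS : R * S = S * R⁻¹) (k : ℕ) :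
    R ^ k * S = S * (R ^ k)⁻¹ := by
  induction k with
  | zero => simp
  | succ k ih => rw [pow_succ, mul_assoc, hRS, ← mul_assoc, ih]; group

def dihHom {G : Type*} [Group G] (R S : G) (h : R ^ 4 = 1) (hS : S * S = 1)
    (hRS : R * S = S * R⁻¹) : DihedralGroup 4 →* G where
  toFun
    | .r i => R ^ i.val
    | .sr i => S * R ^ i.val
  map_one' := by
    change R ^ (0 : ZMod 4).val = 1
    simp
  map_mul' := by
    have key := conj_pow_inv R S hRS
    rintro (i | i) (j | j)
    · exact pow_val_add R h i j
    · simp only [DihedralGroup.r_mul_sr]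
      rw [← mul_assoc, key, sub_eq_neg_add, pow_val_add R h, pow_val_neg R h, mul_assoc]
    · simp only [DihedralGroup.sr_mul_r]
      rw [pow_val_add R h, mul_assoc]
    · simp only [DihedralGroup.sr_mul_sr]
      rw [mul_assoc, ← mul_assoc _ S, key, ← mul_assoc, ← mul_assoc, hS, one_mul,
        sub_eq_neg_add, pow_val_add R h, pow_val_neg R h]

lemma d1s_apply (p : TT) : (d1s : MulAut TT) p = (p.2⁻¹, p.1) := rfl
lemma dsA_apply (p : TT) : (dsA : MulAut TT) p = (p.2, p.1) := rfl

lemma dsA_sq : dsA * dsA = 1 := by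
  apply Subtype.ext; apply MulEquiv.ext; intro p; rfl

lemma dj1_sq : dj1 * dj1 = 1 := by
  apply Subtype.ext; apply MulEquiv.ext; intro p
  change ((p.1⁻¹)⁻¹, p.2) = p
  simp

lemma dj2_eq : dj2 = dsA * d1s := by
  apply Subtype.ext; apply MulEquiv.ext; intro p; rfl

lemma dj1_eq : dj1 = d1s * dsA := by
  rw [d1s, mul_assoc, dsA_sq, mul_one]

lemma DD_top (K : Subgroup DD) (h1 : dsA ∈ K) (h2 : d1s ∈ K) : K = ⊤ := by
  have e : Subgroup.closure (((↑) : DD → MulAut TT) ⁻¹' {j1, j2, sA}) = ⊤ :=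
    Subgroup.closure_closure_coe_preimage
  rw [eq_top_iff, ← e, Subgroup.closure_le]
  rintro d hd
  simp only [Set.mem_preimage, Set.mem_insert_iff, Set.mem_singleton_iff] at hd
  rcases hd with hd | hd | hd
  · have : d = dj1 := Subtype.ext hd
    rw [this, dj1_eq]; exact K.mul_mem h2 h1
  · have : d = dj2 := Subtype.ext hd
    rw [this, dj2_eq]; exact K.mul_mem h1 h2
  · have : d = dsA := Subtype.ext hd
    rwa [this]

lemma d1s_pow : d1s ^ 4 = 1 := by
  apply Subtype.ext; apply MulEquiv.ext; intro p
  change (((p.1⁻¹)⁻¹), ((p.2⁻¹)⁻¹)) = p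
  simp

lemma d1s_rel : d1s * dsA = dsA * d1s⁻¹ := by
  rw [← dj1_eq, d1s, mul_inv_rev, ← mul_assoc, mul_inv_cancel, one_mul]
  exact eq_inv_of_mul_eq_one_left dj1_sq

def dihD : DihedralGroup 4 →* DD := dihHom d1s dsA d1s_pow dsA_sq d1s_rel

lemma dihD_bij : Function.Bijective dihD := by
  constructor
  · rw [injective_iff_map_eq_one]
    intro a ha
    have h := congrArg (fun d : DD => (d : MulAut TT)
      (Units.mk0 (2 : ℂ) (by norm_num), Units.mk0 (3 : ℂ) (by norm_num))) ha
    rcases a with i | i <;> fin_cases i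
    all_goals first
      | rfl
      | exfalso
        simp only [dihD, dihHom, MonoidHom.coe_mk, OneHom.coe_mk] at h
        have h1 := congrArg (fun p : TT => (p.1 : ℂ)) h
        have h2 := congrArg (fun p : TT => (p.2 : ℂ)) h
        simp [ZMod.val, pow_succ, d1s_apply, dsA_apply] at h1 h2
        done
      | exfalso
        simp only [dihD, dihHom, MonoidHom.coe_mk, OneHom.coe_mk] at h
        have h1 := congrArg (fun p : TT => (p.1 : ℂ)) h
        simp [ZMod.val, pow_succ, d1s_apply, dsA_apply] at h1
        norm_num at h1
        done
      | exfalso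
        simp only [dihD, dihHom, MonoidHom.coe_mk, OneHom.coe_mk] at h
        have h2 := congrArg (fun p : TT => (p.2 : ℂ)) h
        simp [ZMod.val, pow_succ, d1s_apply, dsA_apply] at h2
        norm_num at h2
        done
  · rw [← MonoidHom.range_eq_top]
    apply DD_top
    · exact ⟨.sr 0, by simp [dihD, dihHom]⟩
    · exact ⟨.r 1, pow_one d1s⟩

def dihE : DihedralGroup 4 ≃* DD := MulEquiv.ofBijective dihD dihD_bij

lemma card_DD : Nat.card DD = 8 := by
  rw [← Nat.card_congr dihE.toEquiv, DihedralGroup.nat_card]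

lemma mem_Tsub (g : NQ) : g ∈ Tsub ↔ g.right = 1 := by
  rw [Tsub, SemidirectProduct.range_inl_eq_ker_rightHom]; rfl

lemma DD_neg (d : DD) : (d : MulAut TT) ((-1, -1) : TT) = (-1, -1) := by
  let K : Subgroup DD := (MulAction.stabilizer (MulAut TT) ((-1, -1) : TT)).subgroupOf DD
  have : K = ⊤ := by
    apply DD_top
    · change (dsA : MulAut TT) ((-1, -1) : TT) = (-1, -1); rfl
    · change (d1s : MulAut TT) ((-1, -1) : TT) = (-1, -1)
      rw [d1s_apply]; ext <;> simp
  have h : d ∈ K := this ▸ Subgroup.mem_top d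
  exact h

/-- Solve x y = a, y / x = b ... to move a lift of ι₁ s to ι₁ s. -/
lemma exists_conj (a b : ℂˣ) : ∃ p : TT, p * (a, b) * ((d1s : MulAut TT) p)⁻¹ = 1 := by
  -- p = (x, y): x a y = 1, y b x⁻¹ = 1
  obtain ⟨z, hz⟩ := IsAlgClosed.exists_pow_nat_eq ((b * a⁻¹ : ℂˣ) : ℂ) (n := 2) (by norm_num)
  have hz0 : z ≠ 0 := by
    rintro rfl
    exact (b * a⁻¹).ne_zero (by rw [← hz]; simp)
  have hx : (Units.mk0 z hz0) ^ 2 = b * a⁻¹ := by ext; simpa using hz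
  set x := Units.mk0 z hz0
  refine ⟨(x, x * b⁻¹), ?_⟩
  rw [d1s_apply]
  ext1
  · have : x * a * (x * b⁻¹) = x ^ 2 * (a * b⁻¹) := by rw [pow_two]; ac_rfl
    simp only [Prod.mk_mul_mk, Prod.inv_mk, inv_inv, Prod.fst_one, this, hx]
    group
  · simp [mul_comm]

lemma gen (G H : Subgroup NQ) (hHG : H ≤ G) (a b : ℂˣ) (hs : tl a b * rr dsA ∈ H)
    (hr : rr d1s ∈ H) (hK : ∀ p : TT, SemidirectProduct.inl p ∈ G →
      (SemidirectProduct.inl p : NQ) ∈ H) : G = H := by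
  refine le_antisymm ?_ hHG
  intro g hg
  have : Subgroup.map πN H = ⊤ := by
    apply DD_top
    · exact ⟨_, hs, by simp [πN, tl, rr]⟩
    · exact ⟨_, hr, by simp [πN, rr]⟩
  obtain ⟨h, hh, e⟩ := this ▸ Subgroup.mem_top (πN g)
  have h1 : g * h⁻¹ ∈ Tsub := by
    rw [mem_Tsub]
    change πN (g * h⁻¹) = 1
    rw [map_mul, map_inv, e, mul_inv_cancel]
  obtain ⟨p, hp⟩ := h1
  have h2 := hK p (hp ▸ G.mul_mem hg (G.inv_mem (hHG hh)))
  rw [hp] at h2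
  simpa using H.mul_mem h2 hh

lemma card_G (G : Subgroup NQ) (himg : Subgroup.map πN G = ⊤) :
    Nat.card G = Nat.card (G ⊓ Tsub : Subgroup NQ) * 8 := by
  have h := Subgroup.card_mul_index (πN.domRestrict G).ker
  rw [Subgroup.index_ker, MonoidHom.domRestrict_range, himg, Subgroup.card_top, card_DD,
    MonoidHom.ker_domRestrict] at h
  rw [← h]
  congr 1
  have e : πN.ker = Tsub := (SemidirectProduct.range_inl_eq_ker_rightHom).symm
  rw [e, ← Subgroup.inf_subgroupOf_left]
  exact Nat.card_congr (Subgroup.subgroupOfEquivOfLe inf_le_left).toEquiv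

lemma tneg_sq : tl (-1) (-1) ^ 2 = 1 := by
  rw [tl, ← map_pow]
  have : ((-1, -1) : TT) ^ 2 = 1 := by ext <;> simp
  rw [this, map_one]

def prodHom : Multiplicative (ZMod 2) × DihedralGroup 4 →* NQ :=
  MonoidHom.noncommCoprod (cycHom (tl (-1) (-1)) tneg_sq)
    ((SemidirectProduct.inr : DD →* NQ).comp dihE.toMonoidHom) (by
      intro c d
      refine Commute.pow_left ?_ _
      ext1
      · simp [tl, DD_neg]
      · simp [tl])

lemma iso2 : Nonempty ((Subgroup.closure {tl (-1) (-1), rr dsA, rr d1s} : Subgroup NQ) ≃*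
        Multiplicative (ZMod 2) × DihedralGroup 4) := by
  have hinj : Function.Injective prodHom := by
    rw [injective_iff_map_eq_one]
    rintro ⟨c, d⟩ h
    have h' : cycHom (tl (-1) (-1)) tneg_sq c * SemidirectProduct.inr (dihE d) = 1 := h
    have hc : (cycHom (tl (-1) (-1)) tneg_sq c).right = 1 := by
      change πN (tl (-1) (-1) ^ _) = 1
      rw [map_pow]
      simp [πN, tl]
    have hd : dihE d = 1 := by
      have := congrArg SemidirectProduct.right h'
      simpa [hc] using this
    rw [hd] at h'
    have hd' : d = 1 := by simpa using hd
    simp only [map_one, mul_one] at h'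
    subst hd'
    revert h'
    have hne : tl (-1) (-1) ≠ 1 := by
      intro h
      have := congrArg (fun g : NQ => ((g.left.1 : ℂˣ) : ℂ)) h
      simp [tl] at this
      norm_num at this
    obtain ⟨c, rfl⟩ := Multiplicative.ofAdd.surjective c
    fin_cases c
    · intro _; rfl
    · intro h
      exfalso; apply hne
      exact (pow_one _).symm.trans h
  have hr : prodHom.range = Subgroup.closure {tl (-1) (-1), rr dsA, rr d1s} := by
    apply le_antisymm
    · rintro _ ⟨⟨c, d⟩, rfl⟩
      change (tl (-1) (-1)) ^ _ * (SemidirectProduct.inr (dihE d) : NQ) ∈ _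
      apply Subgroup.mul_mem
      · exact Subgroup.pow_mem _ (Subgroup.subset_closure (by simp)) _
      · have := DD_top (Subgroup.comap SemidirectProduct.inr
          (Subgroup.closure {tl (-1) (-1), rr dsA, rr d1s}))
          (Subgroup.subset_closure (by simp [rr])) (Subgroup.subset_closure (by simp [rr]))
        have h2 := this ▸ Subgroup.mem_top (dihE d)
        exact h2
    · rw [Subgroup.closure_le]
      have hd : ∀ d : DD, rr d ∈ prodHom.range := fun d =>
        ⟨(1, dihE.symm d), by simp [prodHom, rr]⟩
      rintro g (rfl | rfl | rfl)
      · exact ⟨(Multiplicative.ofAdd 1, 1), by simp [prodHom, cycHom, ZMod.val_one]⟩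
      · exact hd _
      · exact hd _
  rw [← hr]
  exact ⟨(MonoidHom.ofInjective hinj).symm⟩

/-- The analysis once a lift of ι₁ s has been normalized. -/
lemma key (G : Subgroup NQ)
    (himg : Subgroup.map πN G = ⊤)
    (hT : Nat.card (G ⊓ Tsub : Subgroup NQ) = 1 ∨ Nat.card (G ⊓ Tsub : Subgroup NQ) = 2)
    (hfree : ¬ ∀ g ∈ G, g.left = 1) (hr : rr d1s ∈ G) :
    (G = Subgroup.closure {tl (-1) (-1) * rr dsA, rr d1s} ∧
      Nonempty ((Subgroup.closure {tl (-1) (-1) * rr dsA, rr d1s} : Subgroup NQ) ≃*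
        DihedralGroup 4)) ∨
    (G = Subgroup.closure {tl (-1) (-1), rr dsA, rr d1s}) ∨
    (G = Subgroup.closure {tl (-1) (-1), tl 1 (-1) * rr dsA, rr d1s} ∧
      Nat.card
        (Subgroup.closure {tl (-1) (-1), tl 1 (-1) * rr dsA, rr d1s} : Subgroup NQ) = 16) := by
  obtain ⟨g, hg, hgs⟩ : dsA ∈ Subgroup.map πN G := himg ▸ Subgroup.mem_top _
  obtain ⟨a, b, hab⟩ : ∃ a b, tl a b * rr dsA ∈ G := by
    refine ⟨g.left.1, g.left.2, ?_⟩
    have : g.right = dsA := hgs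
    rw [tl, rr, ← this, SemidirectProduct.inl_left_mul_inr_right]
    exact hg
  have hK1 : (SemidirectProduct.inl ((a * b, a * b) : TT) : NQ) ∈ G := by
    have := G.mul_mem hab hab
    convert this using 1
    ext1
    · simp [tl, rr, dsA_apply, mul_comm]
    · simp [tl, rr, dsA_sq]
  have hK2 : (SemidirectProduct.inl ((1, a * a) : TT) : NQ) ∈ G := by
    have h1 := G.mul_mem hr hab
    have := G.mul_mem h1 h1
    convert this using 1
    ext1
    · simp [tl, rr, dsA_apply, d1s_apply]
    · simp only [tl, rr, SemidirectProduct.mul_right, SemidirectProduct.right_inl,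
        SemidirectProduct.right_inr, one_mul]
      rw [← dj1_eq, dj1_sq]
  have hsq : ∀ u : ℂˣ, u * u = 1 → u = 1 ∨ u = -1 := fun u hu => by
    have := mul_self_eq_one_iff.mp (congrArg Units.val hu : (u : ℂ) * u = 1)
    rcases this with h | h
    · left; ext; exact h
    · right; ext; simpa using h
  have neg_ne : (-1 : ℂˣ) ≠ 1 := by
    intro h
    have := congrArg Units.val h
    norm_num at this
  rcases hT with hT | hT
  · left
    have hbot : G ⊓ Tsub = ⊥ := Subgroup.card_eq_one.mp hT
    have hK : ∀ p : TT, (SemidirectProduct.inl p : NQ) ∈ G → p = 1 := by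
      intro p hp
      have : (SemidirectProduct.inl p : NQ) ∈ G ⊓ Tsub := ⟨hp, p, rfl⟩
      rw [hbot, Subgroup.mem_bot] at this
      exact SemidirectProduct.inl_injective (by simpa using this)
    have e1 : a * b = 1 := congrArg Prod.fst (hK _ hK1)
    have e2 : a * a = 1 := congrArg Prod.snd (hK _ hK2)
    have e3 : b = a := by rw [← mul_right_inj a, e1, e2]
    subst e3
    rcases hsq _ e2 with rfl | rfl
    · exfalso
      apply hfree
      have h1 : tl 1 1 * rr dsA = rr dsA := by
        have : tl 1 1 = 1 := map_one _
        rw [this, one_mul]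
      have hG := gen G (Subgroup.closure {tl 1 1 * rr dsA, rr d1s})
        (by
          rw [Subgroup.closure_le]
          rintro x (rfl | rfl)
          · exact hab
          · exact hr) 1 1 (Subgroup.subset_closure (by simp)) (Subgroup.subset_closure (by simp))
        (by intro p hp; rw [hK p hp, map_one]; exact Subgroup.one_mem _)
      have hle : G ≤ (SemidirectProduct.inr : DD →* NQ).range := by
        rw [hG, Subgroup.closure_le, h1]
        rintro x (rfl | rfl)
        · exact ⟨_, rfl⟩
        · exact ⟨_, rfl⟩
      intro g hg
      obtain ⟨d, rfl⟩ := hle hg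
      simp
    · have hG := gen G (Subgroup.closure {tl (-1) (-1) * rr dsA, rr d1s})
        (by
          rw [Subgroup.closure_le]
          rintro x (rfl | rfl)
          · exact hab
          · exact hr) (-1) (-1) (Subgroup.subset_closure (by simp))
        (Subgroup.subset_closure (by simp))
        (by intro p hp; rw [hK p hp, map_one]; exact Subgroup.one_mem _)
      refine ⟨hG, ?_⟩
      rw [← hG]
      have hb : Function.Bijective (πN.domRestrict G) := by
        constructor
        · apply (MonoidHom.ker_eq_bot_iff (πN.domRestrict G)).mp
          rw [eq_bot_iff]
          rintro ⟨x, hx⟩ h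
          have : x ∈ G ⊓ Tsub := ⟨hx, (mem_Tsub x).2 h⟩
          rw [hbot, Subgroup.mem_bot] at this
          rw [Subgroup.mem_bot]
          exact Subtype.ext this
        · apply (MonoidHom.range_eq_top (f := πN.domRestrict G)).mp
          rw [MonoidHom.domRestrict_range, himg]
      exact ⟨(MulEquiv.ofBijective _ hb).trans dihE.symm⟩
  · right
    obtain ⟨⟨k, hkG, p, hp⟩, hk1, hk⟩ := (Nat.card_eq_two_iff' (1 : (G ⊓ Tsub : Subgroup NQ))).mp hT
    subst hp
    have hKp : ∀ q : TT, (SemidirectProduct.inl q : NQ) ∈ G → q = 1 ∨ q = p := by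
      intro q hq
      by_cases h : q = 1
      · exact Or.inl h
      · right
        have := hk ⟨SemidirectProduct.inl q, hq, q, rfl⟩ (by
          intro h'
          apply h
          have h3 : (SemidirectProduct.inl q : NQ) = 1 := congrArg Subtype.val h'
          exact SemidirectProduct.inl_injective (h3.trans (map_one _).symm))
        exact SemidirectProduct.inl_injective (congrArg Subtype.val this)
    have hp1 : p ≠ 1 := by
      rintro rfl
      apply hk1
      apply Subtype.ext
      simp
    have hrp : (SemidirectProduct.inl ((d1s : MulAut TT) p) : NQ) ∈ G := by
      have := SemidirectProduct.inl_aut (φ := DD.subtype) d1s p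
      simp only [Subgroup.subtype_apply] at this
      rw [this, map_inv]
      exact G.mul_mem (G.mul_mem hr hkG) (G.inv_mem hr)
    have hpe : (d1s : MulAut TT) p = p := by
      rcases hKp _ hrp with h | h
      · exact absurd (by simpa using h) hp1
      · exact h
    have hpm : p = (-1, -1) := by
      obtain ⟨x, y⟩ := p
      rw [d1s_apply] at hpe
      have h1 : y⁻¹ = x := congrArg Prod.fst hpe
      have h2 : x = y := congrArg Prod.snd hpe
      subst h2
      have h3 : x * x = 1 := by nth_rewrite 2 [← h1]; exact mul_inv_cancel x
      rcases hsq x h3 with rfl | rfl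
      · exact absurd rfl hp1
      · rfl
    subst hpm
    have hm : tl (-1) (-1) ∈ G := hkG
    have e2 : a * a = 1 := by
      rcases hKp _ hK2 with h | h
      · exact congrArg Prod.snd h
      · exact absurd (congrArg Prod.fst h).symm neg_ne
    have e1 : a * b = 1 ∨ a * b = -1 := by
      rcases hKp _ hK1 with h | h
      · exact Or.inl (congrArg Prod.snd h)
      · exact Or.inr (congrArg Prod.snd h)
    have hmul : tl (-a) (-b) * rr dsA ∈ G := by
      have := G.mul_mem hm hab
      convert this using 1
      rw [← mul_assoc, tl, tl, tl, ← map_mul]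
      simp
    have hfin : tl 1 1 * rr dsA ∈ G ∨ tl 1 (-1) * rr dsA ∈ G := by
      rcases hsq a e2 with rfl | rfl
      · rcases e1 with e | e
        · left; rw [one_mul] at e; rwa [e] at hab
        · right; rw [one_mul] at e; rwa [e] at hab
      · rw [neg_neg] at hmul
        rcases e1 with e | e
        · left
          have : -b = 1 := by simpa using e
          rwa [this] at hmul
        · right
          have : -b = -1 := by simpa using e
          rwa [this] at hmul
    rcases hfin with h | h
    · left
      have h1 : tl 1 1 * rr dsA = rr dsA := by
        have : tl 1 1 = 1 := map_one _
        rw [this, one_mul]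
      refine gen G _ ?_ 1 1 ?_ (Subgroup.subset_closure (by simp)) ?_
      · rw [Subgroup.closure_le]
        rintro x (rfl | rfl | rfl)
        · exact hm
        · exact h1 ▸ h
        · exact hr
      · rw [h1]; exact Subgroup.subset_closure (by simp)
      · intro q hq
        rcases hKp q hq with rfl | rfl
        · rw [map_one]; exact Subgroup.one_mem _
        · exact Subgroup.subset_closure (by simp [tl])
    · right
      have hG : G = Subgroup.closure {tl (-1) (-1), tl 1 (-1) * rr dsA, rr d1s} := by
        refine gen G _ ?_ 1 (-1) (Subgroup.subset_closure (by simp))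
          (Subgroup.subset_closure (by simp)) ?_
        · rw [Subgroup.closure_le]
          rintro x (rfl | rfl | rfl)
          · exact hm
          · exact h
          · exact hr
        · intro q hq
          rcases hKp q hq with rfl | rfl
          · rw [map_one]; exact Subgroup.one_mem _
          · exact Subgroup.subset_closure (by simp [tl])
      refine ⟨hG, ?_⟩
      rw [← hG, card_G G himg, hT]

/-!
STATEMENT 6: a finite subgroup G ≤ N with π(G) = N/T (the whole order-8 quotient),
|G ∩ T| ∈ {1,2}, and no fixed point on ℂˣ×ℂˣ is conjugate in N to one of:
(1) ⟨τ_{−1,−1}·s, ι₁·s⟩ ≅ D₄ (order 8);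
(2) ⟨τ_{−1,−1}, s, ι₁·s⟩ ≅ C₂ × D₄ (order 16);
(3) ⟨τ_{−1,−1}, τ_{1,−1}·s, ι₁·s⟩, of order 16 (≅ C₂²⋊C₄, GAP ID (16,3)).
-/
theorem classification_nu_D4 (G : Subgroup NQ) (hfin : Finite G)
    (himg : Subgroup.map πN G = ⊤)
    (hT : Nat.card (G ⊓ Tsub : Subgroup NQ) = 1 ∨ Nat.card (G ⊓ Tsub : Subgroup NQ) = 2)
    (hfree : ¬∃ p : TT, ∀ g ∈ G, fixes g p) :
    (∃ h : NQ,
      Subgroup.map (MulAut.conj h).toMonoidHom G =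
        Subgroup.closure {tl (-1) (-1) * rr dsA, rr d1s} ∧
      Nonempty ((Subgroup.closure {tl (-1) (-1) * rr dsA, rr d1s} : Subgroup NQ) ≃*
        DihedralGroup 4)) ∨
    (∃ h : NQ,
      Subgroup.map (MulAut.conj h).toMonoidHom G =
        Subgroup.closure {tl (-1) (-1), rr dsA, rr d1s} ∧
      Nonempty ((Subgroup.closure {tl (-1) (-1), rr dsA, rr d1s} : Subgroup NQ) ≃*
        Multiplicative (ZMod 2) × DihedralGroup 4)) ∨
    (∃ h : NQ,
      Subgroup.map (MulAut.conj h).toMonoidHom G =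
        Subgroup.closure {tl (-1) (-1), tl 1 (-1) * rr dsA, rr d1s} ∧
      Nat.card
        (Subgroup.closure {tl (-1) (-1), tl 1 (-1) * rr dsA, rr d1s} : Subgroup NQ) = 16) := by
  obtain ⟨g, hg, hgr⟩ : d1s ∈ Subgroup.map πN G := himg ▸ Subgroup.mem_top _
  replace hgr : g.right = d1s := hgr
  obtain ⟨p, hp⟩ := exists_conj g.left.1 g.left.2
  set h : NQ := SemidirectProduct.inl p with hh
  set G' := Subgroup.map (MulAut.conj h).toMonoidHom G with hG'
  have himg' : Subgroup.map πN G' = ⊤ := by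
    rw [eq_top_iff, ← himg]
    rintro _ ⟨x, hx, rfl⟩
    refine ⟨h * x * h⁻¹, ⟨x, hx, rfl⟩, ?_⟩
    simp [πN, hh]
  have hcard : Nat.card (G' ⊓ Tsub : Subgroup NQ) = Nat.card (G ⊓ Tsub : Subgroup NQ) := by
    have e : G' ⊓ Tsub = Subgroup.map (MulAut.conj h).toMonoidHom (G ⊓ Tsub) := by
      ext y
      constructor
      · rintro ⟨⟨x, hx, rfl⟩, hy⟩
        refine ⟨x, ⟨hx, (mem_Tsub x).2 ?_⟩, rfl⟩
        simpa [hh] using (mem_Tsub _).1 hy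
      · rintro ⟨x, ⟨hx, hx'⟩, rfl⟩
        refine ⟨⟨x, hx, rfl⟩, (mem_Tsub _).2 ?_⟩
        have := (mem_Tsub _).1 hx'
        simpa [hh] using this
    rw [e]
    exact (Nat.card_congr (Subgroup.equivMapOfInjective _ _
      (MulAut.conj h).injective).toEquiv).symm
  have hr : rr d1s ∈ G' := by
    refine ⟨g, hg, ?_⟩
    change h * g * h⁻¹ = rr d1s
    ext1
    · simpa [hh, hgr, rr] using hp
    · simp [hh, hgr, rr]
  have hfree' : ¬ ∀ g ∈ G', g.left = 1 := by
    intro H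
    apply hfree
    refine ⟨p⁻¹, fun x hx => ?_⟩
    have := H (h * x * h⁻¹) ⟨x, hx, rfl⟩
    simp only [hh, SemidirectProduct.mul_left, SemidirectProduct.left_inl,
      SemidirectProduct.right_inl, SemidirectProduct.mul_right, SemidirectProduct.inv_left,
      map_one, inv_one, MulAut.one_apply, one_mul, Subgroup.subtype_apply] at this
    rw [fixes, eq_inv_iff_mul_eq_one, mul_comm, ← mul_assoc]
    exact this
  rcases key G' himg' (by rw [hcard]; exact hT) hfree' hr with ⟨h1, h2⟩ | h1 | ⟨h1, h2⟩
  · exact Or.inl ⟨h, h1, h2⟩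
  · exact Or.inr (Or.inl ⟨h, h1, iso2⟩)
  · exact Or.inr (Or.inr ⟨h, h1, h2⟩)

end
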